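/- arXiv:1701.04846 — 2 statements merged into one kernel-verified Lean document; each statement's English description precedes it below -/
import Mathlib

section
/- Let n ≥ 1 and let f : [0,2π] → (0,∞) satisfy f(2π−λ) = f(λ) for all λ ∈ [0,2π]. Then for every z ∈ ℝ^n the identity det(D_n(f))^{−1/2} exp(−(1/2)(F_n z)^T D_n(f)^{−1} (F_n z)) = (2π)^{−n/2} exp(−(1/2) Σ_{j=0}^{n−1} (log f(λ_j) + I_{n,λ_j}(z)/f(λ_j))) holds; i.e. the Gaussian density with covariance F_n^T D_n(f) F_n evaluated at z equals the Whittle likelihood in the time domain. -/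
open MeasureTheory Matrix Filter

/-- The `j`-th Fourier frequency `λ_j = 2πj/n`. -/
noncomputable def fourierFreq (n j : ℕ) : ℝ := 2 * Real.pi * j / n

/-- The periodogram `I_{n,λ}(z) = (2πn)⁻¹ |∑_{t=1}^n z_t e^{-itλ}|²`. -/
noncomputable def periodogram (n : ℕ) (lam : ℝ) (z : Fin n → ℝ) : ℝ :=
  1 / (2 * Real.pi * n) *
    Complex.normSq (∑ t : Fin n, (z t : ℂ) *
      Complex.exp (-Complex.I * (((t : ℕ) + 1 : ℕ) : ℂ) * (lam : ℂ)))

/-- The real orthogonal Fourier transform matrix `F_n` with rows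
`e_0, c_1, s_1, …, c_N, s_N` (and additionally `e_{n/2}` as last row for `n` even). -/
noncomputable def Fmat (n : ℕ) : Matrix (Fin n) (Fin n) ℝ :=
  Matrix.of fun r t : Fin n =>
    if r.val = 0 then 1 / Real.sqrt n
    else if n % 2 = 0 ∧ r.val = n - 1 then (-1 : ℝ) ^ ((t : ℕ) + 1) / Real.sqrt n
    else if r.val % 2 = 1 then
      Real.sqrt 2 / Real.sqrt n *
        Real.cos (2 * Real.pi * (((r.val + 1) / 2 : ℕ) : ℝ) * (((t : ℕ) + 1 : ℕ) : ℝ) / n)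
    else
      -(Real.sqrt 2 / Real.sqrt n) *
        Real.sin (2 * Real.pi * ((r.val / 2 : ℕ) : ℝ) * (((t : ℕ) + 1 : ℕ) : ℝ) / n)

/-- The diagonal matrix `D_n(f)` with entries `2πf(λ_0), 2πf(λ_1), 2πf(λ_1), …`
matching the row ordering of `F_n`. -/
noncomputable def Dmat (n : ℕ) (f : ℝ → ℝ) : Matrix (Fin n) (Fin n) ℝ :=
  Matrix.diagonal fun r : Fin n => 2 * Real.pi * f (fourierFreq n ((r.val + 1) / 2))

/-- The diagonal correction matrix `C_n(f, f_param)` with entries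
`c(λ_0), c(λ_1), c(λ_1), …` where `c = f/f_param`, matching the row ordering of `F_n`. -/
noncomputable def Cmat (n : ℕ) (f fp : ℝ → ℝ) : Matrix (Fin n) (Fin n) ℝ :=
  Matrix.diagonal fun r : Fin n =>
    f (fourierFreq n ((r.val + 1) / 2)) / fp (fourierFreq n ((r.val + 1) / 2))

/-- Entrywise real power of the diagonal of a matrix: for a diagonal matrix `A` with
positive entries, `diagRPow n A (-(1/2))` is `A^{-1/2}` etc. -/
noncomputable def diagRPow (n : ℕ) (A : Matrix (Fin n) (Fin n) ℝ) (p : ℝ) :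
    Matrix (Fin n) (Fin n) ℝ :=
  Matrix.diagonal fun i => A i i ^ p

theorem aux_pair_sum (m : ℕ) (A : ℕ → ℝ) :
    ∑ r ∈ Finset.range (2 * m + 1), A r
      = A 0 + ∑ k ∈ Finset.range m, (A (2 * k + 1) + A (2 * k + 2)) := by
  induction m with
  | zero => simp
  | succ m ih =>
    rw [show 2 * (m + 1) + 1 = 2 * m + 1 + 1 + 1 by ring, Finset.sum_range_succ,
      Finset.sum_range_succ, ih, Finset.sum_range_succ]
    ring

theorem aux_reindex (n : ℕ) (hn : 1 ≤ n) (A G : ℕ → ℝ) (h0 : A 0 = G 0)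
    (hp : ∀ k, 1 ≤ k → 2 * k < n → A (2 * k - 1) + A (2 * k) = G k + G (n - k))
    (he : n % 2 = 0 → A (n - 1) = G (n / 2)) :
    ∑ r ∈ Finset.range n, A r = ∑ r ∈ Finset.range n, G r := by
  have key : ∀ m, 2 * m + 1 ≤ n → ∑ k ∈ Finset.range m, (A (2 * k + 1) + A (2 * k + 2))
      = ∑ k ∈ Finset.range m, G (k + 1) + ∑ k ∈ Finset.range m, G (n - (k + 1)) := by
    intro m hm
    rw [← Finset.sum_add_distrib]
    apply Finset.sum_congr rfl
    intro k hk
    rw [Finset.mem_range] at hk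
    exact hp (k + 1) (by omega) (by omega)
  rcases Nat.even_or_odd' n with ⟨m, rfl | rfl⟩
  · obtain ⟨m, rfl⟩ : ∃ k, m = k + 1 := ⟨m - 1, by omega⟩
    have h1 := he (by omega)
    rw [show 2 * (m + 1) - 1 = 2 * m + 1 by omega, show 2 * (m + 1) / 2 = m + 1 by omega] at h1
    have h2 : ∑ k ∈ Finset.range m, G (2 * (m + 1) - (k + 1))
        = ∑ k ∈ Finset.range m, G (m + 1 + 1 + k) := by
      rw [← Finset.sum_range_reflect]
      apply Finset.sum_congr rfl
      intro k hk
      rw [Finset.mem_range] at hk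
      congr 1; omega
    have h3 := key m (by omega)
    rw [h2] at h3
    have h4 : ∑ r ∈ Finset.range (2 * (m + 1)), G r
        = ∑ r ∈ Finset.range (m + 1 + 1 + m), G r := by congr 2; omega
    rw [h4, Finset.sum_range_add, Finset.sum_range_succ, Finset.sum_range_succ',
      show 2 * (m + 1) = 2 * m + 1 + 1 by ring, Finset.sum_range_succ, aux_pair_sum, h3, h0, h1]
    ring
  · have h2 : ∑ k ∈ Finset.range m, G (2 * m + 1 - (k + 1))
        = ∑ k ∈ Finset.range m, G (m + 1 + k) := by
      rw [← Finset.sum_range_reflect]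
      apply Finset.sum_congr rfl
      intro k hk
      rw [Finset.mem_range] at hk
      congr 1; omega
    have h3 := key m (by omega)
    rw [h2] at h3
    have h4 : ∑ r ∈ Finset.range (2 * m + 1), G r
        = ∑ r ∈ Finset.range (m + 1 + m), G r := by congr 2; omega
    rw [aux_pair_sum, h4, Finset.sum_range_add, Finset.sum_range_succ' G m, h3, h0]
    ring

/-- cosine sum -/
noncomputable def cosSum (n : ℕ) (z : Fin n → ℝ) (x : ℝ) : ℝ :=
  ∑ t : Fin n, z t * Real.cos ((((t : ℕ) + 1 : ℕ) : ℝ) * x)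

/-- sine sum -/
noncomputable def sinSum (n : ℕ) (z : Fin n → ℝ) (x : ℝ) : ℝ :=
  ∑ t : Fin n, z t * Real.sin ((((t : ℕ) + 1 : ℕ) : ℝ) * x)

theorem periodogram_eq (n : ℕ) (x : ℝ) (z : Fin n → ℝ) :
    periodogram n x z = 1 / (2 * Real.pi * n) * (cosSum n z x ^ 2 + sinSum n z x ^ 2) := by
  unfold periodogram
  congr 1
  have h : ∀ t : Fin n, Complex.exp (-Complex.I * (((t : ℕ) + 1 : ℕ) : ℂ) * (x : ℂ))
      = ((Real.cos ((((t : ℕ) + 1 : ℕ) : ℝ) * x) : ℝ) : ℂ)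
        - ((Real.sin ((((t : ℕ) + 1 : ℕ) : ℝ) * x) : ℝ) : ℂ) * Complex.I := by
    intro t
    rw [show -Complex.I * (((t : ℕ) + 1 : ℕ) : ℂ) * (x : ℂ)
      = (-((((t : ℕ) + 1 : ℕ) : ℂ) * (x : ℂ))) * Complex.I by ring, Complex.exp_mul_I,
      Complex.cos_neg, Complex.sin_neg]
    push_cast
    ring
  have h' : (∑ t : Fin n, (z t : ℂ) *
      Complex.exp (-Complex.I * (((t : ℕ) + 1 : ℕ) : ℂ) * (x : ℂ)))
      = ((cosSum n z x : ℝ) : ℂ) + ((-sinSum n z x : ℝ) : ℂ) * Complex.I := by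
    unfold cosSum sinSum
    rw [Complex.ofReal_neg, Complex.ofReal_sum, Complex.ofReal_sum, neg_mul, ← sub_eq_add_neg,
      Finset.sum_mul, ← Finset.sum_sub_distrib]
    refine Finset.sum_congr rfl fun t _ => ?_
    rw [h, Complex.ofReal_mul, Complex.ofReal_mul]
    ring
  rw [h', Complex.normSq_add_mul_I]
  ring

theorem freq_reflect (n k : ℕ) (hn : 1 ≤ n) (hk : k ≤ n) :
    fourierFreq n (n - k) = 2 * Real.pi - fourierFreq n k := by
  unfold fourierFreq
  have : (n : ℝ) ≠ 0 := by positivity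
  rw [Nat.cast_sub hk]
  field_simp

theorem freq_mem (n k : ℕ) (hn : 1 ≤ n) (hk : k ≤ n) :
    fourierFreq n k ∈ Set.Icc 0 (2 * Real.pi) := by
  unfold fourierFreq
  have h1 : (0 : ℝ) < n := by positivity
  have h2 : (k : ℝ) ≤ n := by exact_mod_cast hk
  have := Real.pi_pos
  refine ⟨by positivity, ?_⟩
  rw [div_le_iff₀ h1]
  gcongr

theorem cosSum_reflect (n : ℕ) (z : Fin n → ℝ) (x : ℝ) :
    cosSum n z (2 * Real.pi - x) = cosSum n z x := by
  unfold cosSum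
  refine Finset.sum_congr rfl fun t _ => ?_
  rw [mul_sub, Real.cos_nat_mul_two_pi_sub]

theorem sinSum_reflect (n : ℕ) (z : Fin n → ℝ) (x : ℝ) :
    sinSum n z (2 * Real.pi - x) = - sinSum n z x := by
  unfold sinSum
  rw [← Finset.sum_neg_distrib]
  refine Finset.sum_congr rfl fun t _ => ?_
  rw [mul_sub, Real.sin_nat_mul_two_pi_sub, mul_neg]

/-- transformed vector, with natural number index -/
noncomputable def FzN (n : ℕ) (z : Fin n → ℝ) (r : ℕ) : ℝ :=
  if r = 0 then cosSum n z 0 / Real.sqrt n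
  else if n % 2 = 0 ∧ r = n - 1 then cosSum n z Real.pi / Real.sqrt n
  else if r % 2 = 1 then
    Real.sqrt 2 / Real.sqrt n * cosSum n z (fourierFreq n ((r + 1) / 2))
  else -(Real.sqrt 2 / Real.sqrt n) * sinSum n z (fourierFreq n (r / 2))

theorem Fmat_mulVec (n : ℕ) (z : Fin n → ℝ) (r : Fin n) :
    (Fmat n).mulVec z r = FzN n z r.val := by
  unfold FzN Matrix.mulVec dotProduct Fmat cosSum sinSum fourierFreq
  simp only [Matrix.of_apply]
  split_ifs with h1 h2 h3
  · rw [Finset.sum_div]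
    refine Finset.sum_congr rfl fun t _ => ?_
    simp; ring
  · rw [Finset.sum_div]
    refine Finset.sum_congr rfl fun t _ => ?_
    rw [Real.cos_nat_mul_pi]; ring
  · rw [Finset.mul_sum]
    refine Finset.sum_congr rfl fun t _ => ?_
    rw [show (((t : ℕ) + 1 : ℕ) : ℝ) * (2 * Real.pi * (((r.val + 1) / 2 : ℕ) : ℝ) / n)
      = 2 * Real.pi * (((r.val + 1) / 2 : ℕ) : ℝ) * (((t : ℕ) + 1 : ℕ) : ℝ) / n by ring]
    ring
  · rw [Finset.mul_sum]
    refine Finset.sum_congr rfl fun t _ => ?_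
    rw [show (((t : ℕ) + 1 : ℕ) : ℝ) * (2 * Real.pi * ((r.val / 2 : ℕ) : ℝ) / n)
      = 2 * Real.pi * ((r.val / 2 : ℕ) : ℝ) * (((t : ℕ) + 1 : ℕ) : ℝ) / n by ring]
    ring

theorem main_sum (n : ℕ) (hn : 1 ≤ n) (f : ℝ → ℝ)
    (hf : ∀ x ∈ Set.Icc 0 (2 * Real.pi), 0 < f x)
    (hsym : ∀ x ∈ Set.Icc 0 (2 * Real.pi), f (2 * Real.pi - x) = f x)
    (z : Fin n → ℝ) :
    ∑ r ∈ Finset.range n, (Real.log (f (fourierFreq n ((r + 1) / 2)))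
        + FzN n z r ^ 2 / (2 * Real.pi * f (fourierFreq n ((r + 1) / 2))))
    = ∑ j ∈ Finset.range n, (Real.log (f (fourierFreq n j)) +
          periodogram n (fourierFreq n j) z / f (fourierFreq n j)) := by
  have hn0 : (n : ℝ) ≠ 0 := by positivity
  have hsq : Real.sqrt n ^ 2 = n := Real.sq_sqrt (by positivity)
  have hsq2 : Real.sqrt 2 ^ 2 = 2 := Real.sq_sqrt (by positivity)
  have hpi := Real.pi_ne_zero
  apply aux_reindex n hn
  · have hs : sinSum n z 0 = 0 := by simp [sinSum]
    have hz : fourierFreq n 0 = 0 := by simp [fourierFreq]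
    have hpos := hf _ (freq_mem n 0 hn (by omega))
    rw [hz] at hpos
    have := hpos.ne'
    simp only [FzN, if_true, periodogram_eq, zero_add, Nat.reduceDiv, hz, hs, div_pow, hsq]
    field_simp
    ring
  · intro k hk hkn
    have hpos := (hf _ (freq_mem n k hn (by omega))).ne'
    have e1 : FzN n z (2 * k - 1) = Real.sqrt 2 / Real.sqrt n * cosSum n z (fourierFreq n k) := by
      unfold FzN
      rw [if_neg (by omega), if_neg (by omega), if_pos (by omega),
        show (2 * k - 1 + 1) / 2 = k by omega]
    have e2 : FzN n z (2 * k) = -(Real.sqrt 2 / Real.sqrt n) * sinSum n z (fourierFreq n k) := by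
      unfold FzN
      rw [if_neg (by omega), if_neg (by omega), if_neg (by omega),
        show (2 * k) / 2 = k by omega]
    rw [e1, e2, show (2 * k - 1 + 1) / 2 = k by omega, show (2 * k + 1) / 2 = k by omega,
      freq_reflect n k hn (by omega), hsym _ (freq_mem n k hn (by omega)),
      periodogram_eq, periodogram_eq, cosSum_reflect, sinSum_reflect]
    simp only [mul_pow, neg_sq, div_pow, hsq, hsq2]
    field_simp
    ring
  · intro he
    have hz : fourierFreq n (n / 2) = Real.pi := by
      obtain ⟨m, rfl⟩ : ∃ m, n = 2 * m := ⟨n / 2, by omega⟩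
      have hm : (m : ℝ) ≠ 0 := by
        have : m ≠ 0 := by omega
        exact_mod_cast this
      rw [show 2 * m / 2 = m by omega]
      unfold fourierFreq
      push_cast
      field_simp
    have hs : sinSum n z Real.pi = 0 := by simp [sinSum, Real.sin_nat_mul_pi, -Nat.cast_add]
    have hpos := (hf _ (freq_mem n (n / 2) hn (by omega))).ne'
    have e1 : FzN n z (n - 1) = cosSum n z Real.pi / Real.sqrt n := by
      unfold FzN
      rw [if_neg (by omega), if_pos ⟨he, rfl⟩]
    rw [e1, show (n - 1 + 1) / 2 = n / 2 by omega, periodogram_eq]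
    rw [hz] at hpos ⊢
    rw [hs, div_pow, hsq]
    field_simp
    ring

/-- the Gaussian density with covariance `F_nᵀ D_n(f) F_n` evaluated at `z`
equals the Whittle likelihood in the time domain. -/
theorem statement2 (n : ℕ) (hn : 1 ≤ n) (f : ℝ → ℝ)
    (hf : ∀ x ∈ Set.Icc 0 (2 * Real.pi), 0 < f x)
    (hsym : ∀ x ∈ Set.Icc 0 (2 * Real.pi), f (2 * Real.pi - x) = f x)
    (z : Fin n → ℝ) :
    (Dmat n f).det ^ (-(1 : ℝ) / 2) *
      Real.exp (-(1 / 2) *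
        ((Fmat n).mulVec z ⬝ᵥ ((Dmat n f)⁻¹).mulVec ((Fmat n).mulVec z))) =
    (2 * Real.pi) ^ (-(n : ℝ) / 2) *
      Real.exp (-(1 / 2) * ∑ j : Fin n,
        (Real.log (f (fourierFreq n j.val)) +
          periodogram n (fourierFreq n j.val) z / f (fourierFreq n j.val))) := by
  have hpos : ∀ r : Fin n, 0 < f (fourierFreq n ((r.val + 1) / 2)) := fun r =>
    hf _ (freq_mem n _ hn (by have := r.2; omega))
  have hpi := Real.pi_pos
  have hD : ∀ r : Fin n, 0 < 2 * Real.pi * f (fourierFreq n ((r.val + 1) / 2)) := fun r =>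
    mul_pos (by positivity) (hpos r)
  have hinv : (Dmat n f)⁻¹ = Matrix.diagonal fun r : Fin n =>
      (2 * Real.pi * f (fourierFreq n ((r.val + 1) / 2)))⁻¹ := by
    apply Matrix.inv_eq_right_inv
    unfold Dmat
    rw [Matrix.diagonal_mul_diagonal, ← Matrix.diagonal_one]
    congr 1
    funext r
    exact mul_inv_cancel₀ (hD r).ne'
  have hq : (Fmat n).mulVec z ⬝ᵥ ((Dmat n f)⁻¹).mulVec ((Fmat n).mulVec z)
      = ∑ r : Fin n, FzN n z r.val ^ 2 / (2 * Real.pi * f (fourierFreq n ((r.val + 1) / 2))) := by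
    rw [hinv]
    unfold dotProduct
    refine Finset.sum_congr rfl fun r _ => ?_
    rw [Matrix.mulVec_diagonal, Fmat_mulVec]
    ring
  have hdet : (Dmat n f).det = Real.exp ((n : ℝ) * Real.log (2 * Real.pi)
      + ∑ r : Fin n, Real.log (f (fourierFreq n ((r.val + 1) / 2)))) := by
    unfold Dmat
    rw [Matrix.det_diagonal, Real.exp_add, Real.exp_sum, Finset.prod_mul_distrib]
    congr 1
    · rw [Finset.prod_const, Finset.card_univ, Fintype.card_fin, Real.exp_nat_mul,
        Real.exp_log (by positivity)]
    · exact Finset.prod_congr rfl fun r _ => (Real.exp_log (hpos r)).symm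
  have hm := main_sum n hn f hf hsym z
  rw [← Fin.sum_univ_eq_sum_range (fun r => Real.log (f (fourierFreq n ((r + 1) / 2)))
        + FzN n z r ^ 2 / (2 * Real.pi * f (fourierFreq n ((r + 1) / 2)))),
    ← Fin.sum_univ_eq_sum_range (fun j => Real.log (f (fourierFreq n j)) +
          periodogram n (fourierFreq n j) z / f (fourierFreq n j)),
    Finset.sum_add_distrib] at hm
  rw [← hm, hq, hdet, ← Real.exp_mul, Real.rpow_def_of_pos (by positivity : 0 < 2 * Real.pi),
    ← Real.exp_add, ← Real.exp_add]
  congr 1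
  ring
end

section
/- Let n ≥ 1, let p_param : ℝ^n → [0,∞) be a probability density with respect to Lebesgue measure, let f, f_param : [0,2π] → (0,∞), set C = C_n(f, f_param), and define the corrected density p^C(z) := det(C)^{−1/2} p_param(F_n^T C^{−1/2} F_n z). Then for every 0 ≤ j ≤ ⌊n/2⌋, the expected periodogram under the corrected likelihood satisfies the exact identity ∫_{ℝ^n} I_{n,λ_j}(z) p^C(z) dz = (f(λ_j)/f_param(λ_j)) ∫_{ℝ^n} I_{n,λ_j}(z) p_param(z) dz (as an identity of Lebesgue integrals with values in [0,∞]). -/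
open MeasureTheory Matrix Filter

lemma aux_sum_cexp (n : ℕ) (hn : 1 ≤ n) (m : ℤ) :
    ∑ t : Fin n, Complex.exp (2 * Real.pi * Complex.I * m * ((t : ℕ) + 1 : ℕ) / n) =
      if (n : ℤ) ∣ m then (n : ℂ) else 0 := by
  have hn0 : (n : ℂ) ≠ 0 := by exact_mod_cast (by omega : n ≠ 0)
  set ζ : ℂ := Complex.exp (2 * Real.pi * Complex.I * m / n) with hζ
  have h1 : ∀ k : ℕ, Complex.exp (2 * Real.pi * Complex.I * m * (k : ℕ) / n) = ζ ^ k := by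
    intro k
    rw [hζ, ← Complex.exp_nat_mul]
    congr 1
    ring
  have hζn : ζ ^ n = 1 := by
    rw [← h1 n, Complex.exp_eq_one_iff]
    refine ⟨m, ?_⟩
    field_simp
  simp_rw [h1]
  rw [Fin.sum_univ_eq_sum_range (fun t => ζ ^ (t + 1)) n]
  split_ifs with hd
  · have : ζ = 1 := by
      obtain ⟨c, rfl⟩ := hd
      rw [hζ, Complex.exp_eq_one_iff]
      refine ⟨c, ?_⟩
      push_cast
      field_simp
    simp [this]
  · have hne : ζ ≠ 1 := by
      intro h
      rw [hζ, Complex.exp_eq_one_iff] at h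
      obtain ⟨c, hc⟩ := h
      apply hd
      refine ⟨c, ?_⟩
      have hpi : (2 * Real.pi * Complex.I : ℂ) ≠ 0 := Complex.two_pi_I_ne_zero
      have : (2 * Real.pi * Complex.I : ℂ) * m = (2 * Real.pi * Complex.I) * (n * c) := by
        rw [div_eq_iff hn0] at hc
        rw [hc]; ring
      have := mul_left_cancel₀ hpi this
      exact_mod_cast this
    simp_rw [pow_succ]
    rw [← Finset.sum_mul, geom_sum_eq hne, hζn]
    simp

lemma aux_sum_cos (n : ℕ) (hn : 1 ≤ n) (m : ℤ) (φ : ℝ) :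
    ∑ t : Fin n, Real.cos (2 * Real.pi * m * ((t : ℕ) + 1 : ℕ) / n + φ) =
      if (n : ℤ) ∣ m then n * Real.cos φ else 0 := by
  have h := congrArg (fun z => (z * Complex.exp (φ * Complex.I)).re) (aux_sum_cexp n hn m)
  simp only [Finset.sum_mul, Complex.re_sum, ← Complex.exp_add] at h
  have e : ∀ t : Fin n, Real.cos (2 * Real.pi * m * ((t : ℕ) + 1 : ℕ) / n + φ) =
      (Complex.exp (2 * Real.pi * Complex.I * m * ((t : ℕ) + 1 : ℕ) / n
        + φ * Complex.I)).re := by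
    intro t
    rw [← Complex.exp_ofReal_mul_I_re]
    congr 2
    push_cast
    ring
  simp_rw [e]
  rw [h]
  split_ifs
  · rw [← Complex.ofReal_natCast, Complex.re_ofReal_mul, Complex.exp_ofReal_mul_I_re]
  · simp

noncomputable def auxA (n r : ℕ) : ℝ :=
  if r = 0 ∨ (n % 2 = 0 ∧ r = n - 1) then 1 / Real.sqrt n else Real.sqrt 2 / Real.sqrt n

noncomputable def auxPhi (r : ℕ) : ℝ :=
  if r = 0 ∨ r % 2 = 1 then 0 else Real.pi / 2

lemma aux_F (n : ℕ) (r t : Fin n) :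
    Fmat n r t = auxA n r * Real.cos (2 * Real.pi * ((((r : ℕ) + 1) / 2 : ℕ) : ℤ) *
      ((t : ℕ) + 1 : ℕ) / n + auxPhi r) := by
  have hr := r.2
  have hn0 : (n : ℝ) ≠ 0 := by exact_mod_cast (by omega : n ≠ 0)
  simp only [Fmat, Matrix.of_apply, auxA, auxPhi]
  by_cases h0 : (r : ℕ) = 0
  · simp [h0]
  by_cases h1 : n % 2 = 0 ∧ (r : ℕ) = n - 1
  · have hodd : (r : ℕ) % 2 = 1 := by omega
    rw [if_neg h0, if_pos h1, if_pos (Or.inr h1), if_pos (Or.inr hodd)]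
    have hk : (2 : ℝ) * ((((r : ℕ) + 1) / 2 : ℕ) : ℝ) = n := by
      exact_mod_cast (by omega : 2 * (((r : ℕ) + 1) / 2) = n)
    have : (2 * Real.pi * (((((r : ℕ) + 1) / 2 : ℕ) : ℤ) : ℝ) * (((t : ℕ) + 1 : ℕ) : ℝ) / n + 0)
        = (((t : ℕ) + 1 : ℕ) : ℝ) * Real.pi := by
      rw [add_zero, div_eq_iff hn0, Int.cast_natCast]
      linear_combination (Real.pi * (((t : ℕ) + 1 : ℕ) : ℝ)) * hk
    rw [this, Real.cos_nat_mul_pi]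
    ring
  by_cases h2 : (r : ℕ) % 2 = 1
  · rw [if_neg h0, if_neg h1, if_pos h2, if_neg (by tauto), if_pos (Or.inr h2), add_zero,
      Int.cast_natCast]
  · rw [if_neg h0, if_neg h1, if_neg h2, if_neg (by tauto), if_neg (by tauto),
      Real.cos_add_pi_div_two, Int.cast_natCast, show ((r : ℕ) + 1) / 2 = (r : ℕ) / 2 by omega]
    ring

lemma aux_orth (n : ℕ) (hn : 1 ≤ n) : Fmat n * (Fmat n)ᵀ = 1 := by
  have hnp : (0 : ℝ) < n := by exact_mod_cast hn
  ext r s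
  have hr := r.2
  have hs := s.2
  rw [Matrix.mul_apply, Matrix.one_apply]
  simp only [Matrix.transpose_apply, aux_F]
  set k : ℕ := ((r : ℕ) + 1) / 2 with hk
  set l : ℕ := ((s : ℕ) + 1) / 2 with hl
  have key : ∀ t : Fin n,
      auxA n r * Real.cos (2 * Real.pi * (k : ℤ) * ((t : ℕ) + 1 : ℕ) / n + auxPhi r) *
      (auxA n s * Real.cos (2 * Real.pi * (l : ℤ) * ((t : ℕ) + 1 : ℕ) / n + auxPhi s)) =
      auxA n r * auxA n s / 2 *
      (Real.cos (2 * Real.pi * ((k + l : ℤ) : ℝ) * ((t : ℕ) + 1 : ℕ) / n + (auxPhi r + auxPhi s))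
      + Real.cos (2 * Real.pi * ((k - l : ℤ) : ℝ) * ((t : ℕ) + 1 : ℕ) / n
        + (auxPhi r - auxPhi s))) := by
    intro t
    set x := 2 * Real.pi * (k : ℤ) * ((t : ℕ) + 1 : ℕ) / (n : ℝ) + auxPhi r with hx
    set y := 2 * Real.pi * (l : ℤ) * ((t : ℕ) + 1 : ℕ) / (n : ℝ) + auxPhi s with hy
    have e1 : 2 * Real.pi * ((k + l : ℤ) : ℝ) * ((t : ℕ) + 1 : ℕ) / n + (auxPhi r + auxPhi s)
        = x + y := by
      rw [hx, hy]; push_cast; ring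
    have e2 : 2 * Real.pi * ((k - l : ℤ) : ℝ) * ((t : ℕ) + 1 : ℕ) / n + (auxPhi r - auxPhi s)
        = x - y := by
      rw [hx, hy]; push_cast; ring
    rw [e1, e2, Real.cos_add x y, Real.cos_sub x y]
    ring
  rw [Finset.sum_congr rfl (fun t _ => key t), ← Finset.mul_sum, Finset.sum_add_distrib,
    aux_sum_cos n hn, aux_sum_cos n hn]
  have hsub : ((n : ℤ) ∣ (k : ℤ) - l) ↔ k = l := by
    constructor
    · intro h
      by_contra hne
      have := Int.eq_zero_of_abs_lt_dvd h (by rw [abs_lt]; omega)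
      omega
    · intro h; simp [h]
  have hadd : ((n : ℤ) ∣ (k : ℤ) + l) ↔
      (r = s ∧ ((r : ℕ) = 0 ∨ (n % 2 = 0 ∧ (r : ℕ) = n - 1))) := by
    rw [Fin.ext_iff]
    constructor
    · rintro ⟨c, hc⟩
      have hc0 : 0 ≤ c := by
        by_contra h
        have : (n : ℤ) * c < 0 := mul_neg_of_pos_of_neg (by omega) (by omega)
        omega
      have hc2 : c < 2 := by
        by_contra h
        have : (n : ℤ) * 2 ≤ n * c := mul_le_mul_of_nonneg_left (by omega) (by omega)
        omega
      interval_cases c <;> omega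
    · rintro ⟨h, h' | h'⟩
      · have : (k : ℤ) + l = 0 := by omega
        simp [this]
      · have : (k : ℤ) + l = n := by omega
        simp [this]
  have hsq : Real.sqrt n * Real.sqrt n = n := Real.mul_self_sqrt hnp.le
  have hsn : Real.sqrt n ≠ 0 := (Real.sqrt_pos.2 hnp).ne'
  have h2 : Real.sqrt 2 * Real.sqrt 2 = 2 := Real.mul_self_sqrt (by norm_num)
  simp only [hsub, hadd]
  by_cases hrs : r = s
  · subst hrs
    simp only [true_and, if_true, sub_self, Real.cos_zero, mul_one, hk, hl]
    by_cases hsp : (r : ℕ) = 0 ∨ (n % 2 = 0 ∧ (r : ℕ) = n - 1)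
    · have hphi : auxPhi r = 0 := by
        unfold auxPhi; rw [if_pos]; omega
      have hA : auxA n r = 1 / Real.sqrt n := by unfold auxA; rw [if_pos hsp]
      rw [if_pos hsp, hphi, hA, add_zero, Real.cos_zero]
      field_simp
      nlinarith
    · have hA : auxA n r = Real.sqrt 2 / Real.sqrt n := by unfold auxA; rw [if_neg hsp]
      rw [if_neg hsp, hA]
      have : Real.sqrt 2 / Real.sqrt n * (Real.sqrt 2 / Real.sqrt n) = 2 / n := by
        rw [div_mul_div_comm, h2, hsq]
      rw [this]
      field_simp
      ring
  · rw [if_neg (fun h => hrs h.1), if_neg hrs]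
    have hrs' : (r : ℕ) ≠ s := fun h => hrs (Fin.ext h)
    by_cases hkl : k = l
    · rw [if_pos hkl]
      have : Real.cos (auxPhi r - auxPhi s) = 0 := by
        unfold auxPhi
        by_cases ho : (r : ℕ) % 2 = 1
        · rw [if_pos (Or.inr ho), if_neg (by omega)]
          simp
        · rw [if_neg (by omega), if_pos (by omega)]
          simp
      rw [this]; simp
    · rw [if_neg hkl]; simp

lemma aux_A_ne (n : ℕ) (hn : 1 ≤ n) (r : ℕ) : auxA n r ≠ 0 := by
  have hnp : (0 : ℝ) < n := by exact_mod_cast hn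
  unfold auxA
  split_ifs <;> positivity

/-- real and imaginary parts of the transform are (multiples of) coordinates of `F z`. -/
lemma aux_cos_scale (n : ℕ) (hn : 1 ≤ n) (d : ℕ → ℝ) (M : Matrix (Fin n) (Fin n) ℝ)
    (hM : Fmat n * M = Matrix.diagonal (fun r : Fin n => d (((r : ℕ) + 1) / 2)) * Fmat n)
    (z : Fin n → ℝ) (r : Fin n) :
    ∑ t : Fin n, Real.cos (2 * Real.pi * ((((r : ℕ) + 1) / 2 : ℕ) : ℤ) *
      ((t : ℕ) + 1 : ℕ) / n + auxPhi r) * (M.mulVec z) t =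
    d (((r : ℕ) + 1) / 2) * ∑ t : Fin n, Real.cos (2 * Real.pi * ((((r : ℕ) + 1) / 2 : ℕ) : ℤ) *
      ((t : ℕ) + 1 : ℕ) / n + auxPhi r) * z t := by
  have h : (Fmat n).mulVec (M.mulVec z) r = d (((r : ℕ) + 1) / 2) * (Fmat n).mulVec z r := by
    rw [Matrix.mulVec_mulVec, hM, ← Matrix.mulVec_mulVec, Matrix.mulVec_diagonal]
  simp only [Matrix.mulVec, dotProduct, aux_F] at h
  simp only [mul_assoc (auxA n r)] at h
  rw [← Finset.mul_sum, ← Finset.mul_sum] at h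
  apply mul_left_cancel₀ (aux_A_ne n hn r)
  simp only [Matrix.mulVec, dotProduct]
  rw [h]; ring

lemma aux_per (n j : ℕ) (z : Fin n → ℝ) :
    periodogram n (fourierFreq n j) z = 1 / (2 * Real.pi * n) *
     ((∑ t : Fin n, Real.cos (2 * Real.pi * (j : ℤ) * ((t : ℕ) + 1 : ℕ) / n) * z t) ^ 2 +
      (∑ t : Fin n, Real.cos (2 * Real.pi * (j : ℤ) * ((t : ℕ) + 1 : ℕ) / n + Real.pi / 2)
        * z t) ^ 2) := by
  unfold periodogram
  congr 1
  have e : ∀ t : Fin n, Complex.exp (-Complex.I * (((t : ℕ) + 1 : ℕ) : ℂ) * (fourierFreq n j : ℂ))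
      = Complex.exp (((-(2 * Real.pi * (j : ℤ) * ((t : ℕ) + 1 : ℕ) / n) : ℝ) : ℂ) * Complex.I) := by
    intro t
    congr 1
    unfold fourierFreq
    push_cast
    ring
  rw [Complex.normSq_apply, Complex.re_sum, Complex.im_sum]
  simp only [e, Complex.re_ofReal_mul, Complex.im_ofReal_mul, Complex.exp_ofReal_mul_I_re,
    Complex.exp_ofReal_mul_I_im, Real.cos_neg, Real.sin_neg, Real.cos_add_pi_div_two]
  simp only [mul_comm (z _)]
  ring

lemma aux_per_scale (n : ℕ) (hn : 1 ≤ n) (d : ℕ → ℝ) (M : Matrix (Fin n) (Fin n) ℝ)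
    (hM : Fmat n * M = Matrix.diagonal (fun r : Fin n => d (((r : ℕ) + 1) / 2)) * Fmat n)
    (z : Fin n → ℝ) (j : ℕ) (hj : j ≤ n / 2) :
    periodogram n (fourierFreq n j) (M.mulVec z) =
      d j ^ 2 * periodogram n (fourierFreq n j) z := by
  have hnp : (n : ℝ) ≠ 0 := by exact_mod_cast (by omega : n ≠ 0)
  rw [aux_per, aux_per]
  have h1 : ∑ t : Fin n, Real.cos (2 * Real.pi * (j : ℤ) * ((t : ℕ) + 1 : ℕ) / n)
        * (M.mulVec z) t =
      d j * ∑ t : Fin n, Real.cos (2 * Real.pi * (j : ℤ) * ((t : ℕ) + 1 : ℕ) / n) * z t := by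
    have h := aux_cos_scale n hn d M hM z ⟨2 * j - 1, by omega⟩
    have hp : auxPhi (2 * j - 1) = 0 := by unfold auxPhi; rw [if_pos]; omega
    have hk : (2 * j - 1 + 1) / 2 = j := by omega
    simpa only [hp, hk, add_zero] using h
  have h2 : ∑ t : Fin n, Real.cos (2 * Real.pi * (j : ℤ) * ((t : ℕ) + 1 : ℕ) / n + Real.pi / 2)
        * (M.mulVec z) t =
      d j * ∑ t : Fin n, Real.cos (2 * Real.pi * (j : ℤ) * ((t : ℕ) + 1 : ℕ) / n + Real.pi / 2)
        * z t := by
    by_cases hj0 : j = 0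
    · simp [hj0]
    by_cases hjn : 2 * j = n
    · have : ∀ t : Fin n, Real.cos (2 * Real.pi * (j : ℤ) * ((t : ℕ) + 1 : ℕ) / n + Real.pi / 2)
          = 0 := by
        intro t
        have hk : (2 : ℝ) * (j : ℝ) = n := by exact_mod_cast hjn
        have : 2 * Real.pi * (j : ℤ) * ((t : ℕ) + 1 : ℕ) / n
            = (((t : ℕ) + 1 : ℕ) : ℝ) * Real.pi := by
          rw [div_eq_iff hnp, Int.cast_natCast]
          linear_combination (Real.pi * (((t : ℕ) + 1 : ℕ) : ℝ)) * hk
        rw [this, Real.cos_add_pi_div_two, Real.sin_nat_mul_pi, neg_zero]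
      simp only [this, zero_mul, Finset.sum_const_zero, mul_zero]
    · have h := aux_cos_scale n hn d M hM z ⟨2 * j, by omega⟩
      have hp : auxPhi (2 * j) = Real.pi / 2 := by unfold auxPhi; rw [if_neg]; omega
      have hk : (2 * j + 1) / 2 = j := by omega
      simpa only [hp, hk] using h
  rw [h1, h2]
  ring

/-- exact identity for the expected periodogram under the corrected
likelihood, as Lebesgue integrals with values in `[0,∞]`. -/
theorem statement7 (n : ℕ) (hn : 1 ≤ n)
    (p : (Fin n → ℝ) → ENNReal) (hp_meas : Measurable p) (hp1 : ∫⁻ z, p z = 1)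
    (f fp : ℝ → ℝ)
    (hf : ∀ x ∈ Set.Icc 0 (2 * Real.pi), 0 < f x)
    (hfp : ∀ x ∈ Set.Icc 0 (2 * Real.pi), 0 < fp x)
    (j : ℕ) (hj : j ≤ n / 2) :
    ∫⁻ z, ENNReal.ofReal (periodogram n (fourierFreq n j) z) *
        (ENNReal.ofReal ((Cmat n f fp).det ^ (-(1 : ℝ) / 2)) *
          p (((Fmat n)ᵀ * diagRPow n (Cmat n f fp) (-(1 / 2)) * Fmat n).mulVec z)) =
      ENNReal.ofReal (f (fourierFreq n j) / fp (fourierFreq n j)) *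
        ∫⁻ z, ENNReal.ofReal (periodogram n (fourierFreq n j) z) * p z := by
  have hnp : (0 : ℝ) < n := by exact_mod_cast hn
  have hmem : ∀ k : ℕ, k ≤ n → fourierFreq n k ∈ Set.Icc 0 (2 * Real.pi) := by
    intro k hk
    have hk' : (k : ℝ) ≤ n := by exact_mod_cast hk
    unfold fourierFreq
    refine ⟨by positivity, ?_⟩
    rw [div_le_iff₀ hnp]
    exact mul_le_mul_of_nonneg_left hk' (by positivity)
  set c : ℕ → ℝ := fun k => f (fourierFreq n k) / fp (fourierFreq n k) with hc
  have hcpos : ∀ k : ℕ, k ≤ n → 0 < c k := fun k hk =>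
    div_pos (hf _ (hmem k hk)) (hfp _ (hmem k hk))
  have hCr : ∀ r : Fin n, 0 < c (((r : ℕ) + 1) / 2) := fun r => hcpos _ (by have := r.2; omega)
  have hdiag : diagRPow n (Cmat n f fp) (-(1 / 2)) =
      Matrix.diagonal (fun r : Fin n => (fun k => c k ^ (-(1 / 2) : ℝ)) (((r : ℕ) + 1) / 2)) := by
    unfold diagRPow Cmat
    simp [hc]
  have horth := aux_orth n hn
  set M := (Fmat n)ᵀ * diagRPow n (Cmat n f fp) (-(1 / 2)) * Fmat n with hMdef
  have hFM : Fmat n * M = Matrix.diagonal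
      (fun r : Fin n => (fun k => c k ^ (-(1 / 2) : ℝ)) (((r : ℕ) + 1) / 2)) * Fmat n := by
    rw [hMdef, ← hdiag, ← Matrix.mul_assoc, ← Matrix.mul_assoc, horth, Matrix.one_mul]
  have hcj : 0 < c j := hcpos j (by omega)
  have hI : ∀ z, periodogram n (fourierFreq n j) z =
      c j * periodogram n (fourierFreq n j) (M.mulVec z) := by
    intro z
    rw [aux_per_scale n hn (fun k => c k ^ (-(1 / 2) : ℝ)) M hFM z j hj, ← mul_assoc]
    have : c j * (c j ^ (-(1 / 2) : ℝ)) ^ 2 = 1 := by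
      rw [← Real.rpow_natCast, ← Real.rpow_mul hcj.le]
      norm_num
      rw [Real.rpow_neg_one, mul_inv_cancel₀ hcj.ne']
    simp only [this, one_mul]
  have hdetC : (Cmat n f fp).det = ∏ r : Fin n, c (((r : ℕ) + 1) / 2) := by
    unfold Cmat; rw [Matrix.det_diagonal]
  have hdetCpos : 0 < (Cmat n f fp).det := by
    rw [hdetC]; exact Finset.prod_pos fun r _ => hCr r
  have hdetM : M.det = (Cmat n f fp).det ^ (-(1 : ℝ) / 2) := by
    have hF : (Fmat n).det * (Fmat n).det = 1 := by
      have := congrArg Matrix.det horth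
      rwa [Matrix.det_mul, Matrix.det_transpose, Matrix.det_one] at this
    rw [hMdef, Matrix.det_mul, Matrix.det_mul, Matrix.det_transpose, hdiag, Matrix.det_diagonal,
      hdetC, ← Real.finsetProd_rpow _ _ (fun r _ => (hCr r).le), mul_right_comm, hF, one_mul]
    norm_num
  have hdetMpos : 0 < M.det := by rw [hdetM]; exact Real.rpow_pos_of_pos hdetCpos _
  have hmeasI : Measurable (periodogram n (fourierFreq n j)) := by
    have : periodogram n (fourierFreq n j) = fun z => _ := funext (aux_per n j)
    rw [this]
    fun_prop
  set g : (Fin n → ℝ) → ENNReal := fun z =>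
    ENNReal.ofReal (periodogram n (fourierFreq n j) z) * p z with hg
  have hgm : Measurable g := (hmeasI.ennreal_ofReal).mul hp_meas
  have hMm : Measurable (fun z => M.mulVec z) :=
    (Continuous.matrix_mulVec continuous_const continuous_id).measurable
  have hmap := Real.map_matrix_volume_pi_eq_smul_volume_pi (M := M) hdetMpos.ne'
  have hint : ∫⁻ z, g (M.mulVec z) = ENNReal.ofReal (M.det⁻¹) * ∫⁻ z, g z := by
    have h1 : ∫⁻ z, g (M.mulVec z) = ∫⁻ z, g z ∂(Measure.map (Matrix.toLin' M) volume) := by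
      exact (lintegral_map hgm hMm).symm
    rw [h1, hmap, lintegral_smul_measure, abs_of_pos (inv_pos.2 hdetMpos), smul_eq_mul]
  have hpt : ∀ z, ENNReal.ofReal (periodogram n (fourierFreq n j) z) *
        (ENNReal.ofReal ((Cmat n f fp).det ^ (-(1 : ℝ) / 2)) * p (M.mulVec z)) =
      ENNReal.ofReal (c j) * ENNReal.ofReal M.det * g (M.mulVec z) := by
    intro z
    rw [hI z, ENNReal.ofReal_mul hcj.le, ← hdetM, hg]
    ring
  simp_rw [hpt]
  have hgc : Measurable (fun z => g (M.mulVec z)) := hgm.comp hMm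
  rw [lintegral_const_mul _ hgc, hint]
  rw [mul_assoc, ← mul_assoc (ENNReal.ofReal M.det), ← ENNReal.ofReal_mul hdetMpos.le,
    mul_inv_cancel₀ hdetMpos.ne', ENNReal.ofReal_one, one_mul]
end
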